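/- Fix 1 < p < ∞, λ > 0, and κ ≤ 0. For a ∈ ℝ let w_a : ℝ → ℝ denote the unique C¹ solution with t ↦ |w_a′(t)|^{p-2} w_a′(t) C¹ of the equation (e^{-κ t²/2} |w_a′|^{p-2} w_a′)′ = -λ e^{-κ t²/2} |w_a|^{p-2} w_a on ℝ with w_a(a) = -1 and w_a′(a) = 0. If a_n → a in ℝ, then w_{a_n} → w_a and w_{a_n}′ → w_a′ uniformly on every compact subset of ℝ. -/

import Mathlib

/-- The odd power function `sgnPow q x = sign x * |x| ^ q` (with value `0` at `0`);
for `q = p - 1` this is the function usually written `|x|^{p-2} x`. -/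
noncomputable def sgnPow (q x : ℝ) : ℝ := Real.sign x * |x| ^ q

/-- `w` solves the one-dimensional model IVP with initial point `a`. -/
def IsModelSolution (p lam κ a : ℝ) (w : ℝ → ℝ) : Prop :=
  ContDiff ℝ 1 w ∧
  ContDiff ℝ 1 (fun t => sgnPow (p - 1) (deriv w t)) ∧
  (∀ t : ℝ, HasDerivAt (fun s => Real.exp (-κ * s ^ 2 / 2) * sgnPow (p - 1) (deriv w s))
      (-lam * (Real.exp (-κ * t ^ 2 / 2) * sgnPow (p - 1) (w t))) t) ∧
  w a = -1 ∧ deriv w a = 0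

/-!
With `s = p - 1` and `u = |w'|^{s-1} w'`, the equation is the planar system `w' = |u|^{1/s-1} u`,
`u' = κ t u - λ |w|^{s-1} w`. Its field is not Lipschitz on the axes: one of the two powers is
singular there unless `s = 1`. Three facts make up for this. By Grönwall, the energy
`|w|^{s+1} + |u|^{1/s+1}` changes at most by a bounded factor on a compact interval, so nearby
solutions stay bounded and a nontrivial solution never reaches the origin. Hence, for `λ ≠ 0`, the
zeros of `w` and of `u` along the limit solution are simple, and `|w|^{s-1}` and `|u|^{1/s-1}` are
locally integrable. Finally, the increments of `|x|^{q-1} x` are controlled by the singularity at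
one of the two points only, so the squared distance to any other solution satisfies a Grönwall
inequality whose weight depends on the limit solution alone.
-/

open Set Filter Topology MeasureTheory

section sgnPow

variable {q x y M : ℝ}

lemma sgnPow_eq_abs_rpow_mul (q x : ℝ) : sgnPow q x = |x| ^ (q - 1) * x := by
  rcases lt_trichotomy x 0 with hx | rfl | hx
  · rw [sgnPow, Real.sign_of_neg hx, Real.rpow_sub_one (abs_pos_of_neg hx).ne', abs_of_neg hx]
    field_simp [hx.ne]
  · simp [sgnPow]
  · rw [sgnPow, Real.sign_of_pos hx, Real.rpow_sub_one (abs_pos_of_pos hx).ne', abs_of_pos hx]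
    field_simp

lemma sgnPow_zero_right (q : ℝ) : sgnPow q 0 = 0 := by simp [sgnPow]

lemma sgnPow_one_left (x : ℝ) : sgnPow 1 x = x := by simp [sgnPow_eq_abs_rpow_mul]

lemma sgnPow_neg_right (q x : ℝ) : sgnPow q (-x) = -sgnPow q x := by
  simp [sgnPow_eq_abs_rpow_mul]

lemma sgnPow_of_pos (q : ℝ) (hx : 0 < x) : sgnPow q x = x ^ q := by
  simp [sgnPow, Real.sign_of_pos hx, abs_of_pos hx]

lemma abs_sgnPow (hq : q ≠ 0) (x : ℝ) : |sgnPow q x| = |x| ^ q := by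
  rcases eq_or_ne x 0 with rfl | hx
  · simp [sgnPow_zero_right, Real.zero_rpow hq]
  · rw [sgnPow_eq_abs_rpow_mul, abs_mul, Real.abs_rpow_of_nonneg (abs_nonneg x), abs_abs,
      Real.rpow_sub_one (abs_ne_zero.2 hx), div_mul_cancel₀ _ (abs_ne_zero.2 hx)]

lemma sgnPow_ne_zero (q : ℝ) (hx : x ≠ 0) : sgnPow q x ≠ 0 := by
  rw [sgnPow_eq_abs_rpow_mul]
  exact mul_ne_zero (Real.rpow_pos_of_pos (abs_pos.2 hx) _).ne' hx

lemma sgnPow_sgnPow (r q x : ℝ) : sgnPow r (sgnPow q x) = sgnPow (q * r) x := by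
  wlog hx : 0 < x generalizing x
  · rcases (not_lt.1 hx).eq_or_lt with rfl | hx
    · simp only [sgnPow_zero_right]
    · simpa [sgnPow_neg_right] using this (-x) (neg_pos.2 hx)
  rw [sgnPow_of_pos q hx, sgnPow_of_pos r (Real.rpow_pos_of_pos hx q), sgnPow_of_pos _ hx,
    Real.rpow_mul hx.le]

lemma sgnPow_inv_sgnPow (hq : q ≠ 0) (x : ℝ) : sgnPow q⁻¹ (sgnPow q x) = x := by
  rw [sgnPow_sgnPow, mul_inv_cancel₀ hq, sgnPow_one_left]

lemma sgnPow_eq_rpow_max_sub_rpow_max (hq : q ≠ 0) (x : ℝ) :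
    sgnPow q x = max x 0 ^ q - max (-x) 0 ^ q := by
  rcases lt_trichotomy x 0 with hx | rfl | hx
  · simp [sgnPow, Real.sign_of_neg hx, abs_of_neg hx, hx.le, Real.zero_rpow hq]
  · simp [sgnPow_zero_right]
  · simp [sgnPow_of_pos q hx, hx.le, Real.zero_rpow hq]

lemma continuous_sgnPow (hq : 0 < q) : Continuous (sgnPow q) := by
  rw [funext (sgnPow_eq_rpow_max_sub_rpow_max hq.ne')]
  exact ((continuous_id.max continuous_const).rpow_const fun _ => Or.inr hq.le).sub
    ((continuous_neg.max continuous_const).rpow_const fun _ => Or.inr hq.le)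

lemma hasDerivAt_sgnPow_of_ne_zero (q : ℝ) (hx : x ≠ 0) :
    HasDerivAt (sgnPow q) (q * |x| ^ (q - 1)) x := by
  have hasDerivAt_of_pos {y : ℝ} (hy : 0 < y) : HasDerivAt (sgnPow q) (q * |y| ^ (q - 1)) y := by
    rw [abs_of_pos hy]
    refine (Real.hasDerivAt_rpow_const (Or.inl hy.ne')).congr_of_eventuallyEq ?_
    filter_upwards [lt_mem_nhds hy] with z hz using sgnPow_of_pos q hz
  rcases hx.lt_or_gt with hx | hx
  · have hodd : sgnPow q = fun y => -sgnPow q (-y) := by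
      ext y
      rw [sgnPow_neg_right, neg_neg]
    rw [hodd]
    exact ((hasDerivAt_of_pos (neg_pos.2 hx)).comp x (hasDerivAt_neg x)).fun_neg.congr_deriv
      (by simp)
  · exact hasDerivAt_of_pos hx

lemma hasDerivAt_sgnPow (hq : 1 ≤ q) (x : ℝ) : HasDerivAt (sgnPow q) (q * |x| ^ (q - 1)) x := by
  refine hasDerivAt_of_hasDerivAt_of_ne' (x := 0) (g := fun y => q * |y| ^ (q - 1))
    (fun y hy => hasDerivAt_sgnPow_of_ne_zero q hy)
    (continuous_sgnPow (zero_lt_one.trans_le hq)).continuousAt ?_ x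
  exact ((continuous_abs.rpow_const fun _ => Or.inr (sub_nonneg.2 hq)).const_mul q).continuousAt

lemma hasDerivAt_abs_rpow_add_one (hq : 0 < q) (x : ℝ) :
    HasDerivAt (fun y : ℝ => |y| ^ (q + 1)) ((q + 1) * sgnPow q x) x := by
  convert hasDerivAt_abs_rpow x (p := q + 1) (by linarith) using 1
  rw [sgnPow_eq_abs_rpow_mul, mul_assoc]
  ring_nf

lemma abs_sgnPow_sub_le_of_one_le (hq : 1 ≤ q) (hx : |x| ≤ M) (hy : |y| ≤ M) :
    |sgnPow q x - sgnPow q y| ≤ q * M ^ (q - 1) * |x - y| := by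
  refine (convex_Icc (-M) M).norm_image_sub_le_of_norm_hasDerivWithin_le
    (fun t _ => (hasDerivAt_sgnPow hq t).hasDerivWithinAt) (fun t ht => ?_)
    (abs_le.1 hy) (abs_le.1 hx)
  rw [Real.norm_of_nonneg (by positivity)]
  gcongr
  exact abs_le.2 ht

lemma abs_sgnPow_sub_le_of_le_one (hq₀ : 0 ≤ q) (hq₁ : q ≤ 1) (hx : x ≠ 0) :
    |sgnPow q x - sgnPow q y| ≤ 2 * |x| ^ (q - 1) * |x - y| := by
  rcases eq_or_ne y 0 with rfl | hy
  · rw [sgnPow_zero_right, sub_zero, sub_zero, sgnPow_eq_abs_rpow_mul, abs_mul,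
      Real.abs_rpow_of_nonneg (abs_nonneg x), abs_abs]
    gcongr
    exact le_mul_of_one_le_left (by positivity) one_le_two
  have hmul {z : ℝ} (hz : z ≠ 0) : |z| ^ (q - 1) * |z| = |z| ^ q := by
    rw [Real.rpow_sub_one (abs_ne_zero.2 hz), div_mul_cancel₀ _ (abs_ne_zero.2 hz)]
  have hdiff : |(|x| ^ (q - 1) - |y| ^ (q - 1)) * y| ≤ |x| ^ (q - 1) * |x - y| := by
    refine le_trans ?_ (mul_le_mul_of_nonneg_left (abs_abs_sub_abs_le x y) (by positivity))
    rw [abs_mul]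
    rcases le_total |x| |y| with hxy | hxy
    · have hanti := Real.rpow_le_rpow_of_nonpos (abs_pos.2 hx) hxy (sub_nonpos.2 hq₁)
      have hmono := Real.rpow_le_rpow (abs_nonneg x) hxy hq₀
      rw [abs_of_nonneg (sub_nonneg.2 hanti), abs_of_nonpos (sub_nonpos.2 hxy)]
      linarith [hmul hx, hmul hy]
    · have hanti := Real.rpow_le_rpow_of_nonpos (abs_pos.2 hy) hxy (sub_nonpos.2 hq₁)
      have hmono := Real.rpow_le_rpow (abs_nonneg y) hxy hq₀
      rw [abs_of_nonpos (sub_nonpos.2 hanti), abs_of_nonneg (sub_nonneg.2 hxy)]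
      linarith [hmul hx, hmul hy]
  calc |sgnPow q x - sgnPow q y|
      = |(|x| ^ (q - 1) * (x - y) + (|x| ^ (q - 1) - |y| ^ (q - 1)) * y)| := by
        rw [sgnPow_eq_abs_rpow_mul, sgnPow_eq_abs_rpow_mul]
        ring_nf
    _ ≤ |x| ^ (q - 1) * |x - y| + |x| ^ (q - 1) * |x - y| := by
        refine (abs_add_le _ _).trans (add_le_add ?_ hdiff)
        rw [abs_mul, Real.abs_rpow_of_nonneg (abs_nonneg x), abs_abs]
    _ = 2 * |x| ^ (q - 1) * |x - y| := by ring

/- The constant is singular in `x` alone, so the estimate stays useful when `x` runs through a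
fixed solution while `y` runs through arbitrary ones. -/
lemma exists_abs_sgnPow_sub_le (hq : 0 < q) (M : ℝ) :
    ∃ C : ℝ, 0 ≤ C ∧ ∀ x y : ℝ, x ≠ 0 → |x| ≤ M → |y| ≤ M →
      |sgnPow q x - sgnPow q y| ≤ C * (1 + |x| ^ (q - 1)) * |x - y| := by
  rcases le_total q 1 with hq₁ | hq₁
  · refine ⟨2, by simp, fun x y hx _ _ => (abs_sgnPow_sub_le_of_le_one hq.le hq₁ hx).trans ?_⟩
    gcongr
    exact le_add_of_nonneg_left zero_le_one
  · refine ⟨q * |M| ^ (q - 1), by positivity, fun x y _ hx hy =>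
      (abs_sgnPow_sub_le_of_one_le hq₁ (hx.trans (le_abs_self M))
        (hy.trans (le_abs_self M))).trans ?_⟩
    exact mul_le_mul_of_nonneg_right (le_mul_of_one_le_right (by positivity)
      (le_add_of_nonneg_right (Real.rpow_nonneg (abs_nonneg x) _))) (abs_nonneg _)

end sgnPow

section LocallyIntegrable

variable {f f' : ℝ → ℝ} {r : ℝ}

lemma locallyIntegrable_abs_sub_rpow (hr : -1 < r) (a : ℝ) :
    LocallyIntegrable (fun x : ℝ => |x - a| ^ r) := by
  have hzero : LocallyIntegrable (fun x : ℝ => |x| ^ r) := by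
    refine locallyIntegrable_of_norm_le_rpow (C := 1) (α := -r) (by simp) (by simp; linarith)
      (ae_of_all _ fun x => ?_) (measurable_norm.pow_const r).aestronglyMeasurable
    rw [neg_neg, one_mul, Real.norm_of_nonneg (by positivity), Real.norm_eq_abs]
  refine (locallyIntegrable_map_homeomorph (μ := volume) (f := fun x : ℝ => |x| ^ r)
    (Homeomorph.subRight a)).1 ?_
  rwa [Homeomorph.coe_subRight, map_sub_right_eq_self]

lemma countable_zeros_of_hasDerivAt_ne_zero (hf : ∀ t, HasDerivAt f (f' t) t)
    (hf' : ∀ t, f t = 0 → f' t ≠ 0) : {t | f t = 0}.Countable := by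
  refine (HereditarilyLindelofSpace.isLindelof _).countable_of_isDiscrete
    (isDiscrete_iff_nhdsNE.2 fun t ht => ?_)
  rw [← disjoint_iff, Filter.disjoint_principal_right]
  exact (hf t).eventually_ne (hf' t ht)

lemma locallyIntegrable_abs_rpow_of_hasDerivAt (hr : -1 < r) (hf : ∀ t, HasDerivAt f (f' t) t)
    (hf' : ∀ t, f t = 0 → f' t ≠ 0) : LocallyIntegrable (fun t => |f t| ^ r) := by
  have hcont : Continuous f := continuous_iff_continuousAt.2 fun t => (hf t).continuousAt
  have hmeas (t : ℝ) : StronglyMeasurableAtFilter (fun t => |f t| ^ r) (𝓝 t) :=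
    (hcont.abs.measurable.pow_const r).stronglyMeasurable.stronglyMeasurableAtFilter
  intro t
  rcases eq_or_ne (f t) 0 with ht | ht
  · have htheta : (fun y => |f y|) =Θ[𝓝 t] fun y => |y - t| := by
      have hsub := (hf t).isTheta_sub (hf' t ht)
      rw [prod_pure] at hsub
      simpa [Asymptotics.IsTheta, Asymptotics.isBigO_map, Function.comp_def, ht] using hsub
    have hrpow : (fun y => |f y| ^ r) =Θ[𝓝 t] fun y => |y - t| ^ r :=
      htheta.rpow (.of_forall fun y => abs_nonneg (f y)) (.of_forall fun y => abs_nonneg (y - t))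
    exact hrpow.isBigO.integrableAtFilter (hmeas t) (locallyIntegrable_abs_sub_rpow hr t t)
  · exact (volume.finiteAt_nhds t).integrableAtFilter_of_tendsto (hmeas t)
      (hcont.continuousAt.abs.rpow_const (Or.inl (abs_ne_zero.2 ht)))

end LocallyIntegrable

section Gronwall

variable {e e' m : ℝ → ℝ} {A B x y : ℝ}

/- Bounding the logarithmic derivative rather than `e'` gives both time directions at once and
requires only integrability of `m`. -/
lemma log_add_sub_log_add_le_integral {δ : ℝ} (hδ : 0 < δ)
    (hder : ∀ t ∈ Icc A B, HasDerivAt e (e' t) t) (he : ∀ t ∈ Icc A B, 0 ≤ e t)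
    (hm : ∀ t ∈ Icc A B, 0 ≤ m t) (hmint : IntervalIntegrable m volume A B)
    (hbound : ∀ᵐ t, t ∈ Icc A B → |e' t| ≤ m t * e t) (hx : x ∈ Icc A B) (hy : y ∈ Icc A B) :
    |Real.log (e y + δ) - Real.log (e x + δ)| ≤ ∫ t in A..B, m t := by
  wlog hxy : x ≤ y generalizing x y
  · rw [abs_sub_comm]
    exact this hy hx (le_of_not_ge hxy)
  have hsub : Icc x y ⊆ Icc A B := Icc_subset_Icc hx.1 hy.2
  have hpos {t : ℝ} (ht : t ∈ Icc x y) : 0 < e t + δ := add_pos_of_nonneg_of_pos (he t (hsub ht)) hδ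
  have hlog {t : ℝ} (ht : t ∈ Icc x y) :
      HasDerivAt (fun t => Real.log (e t + δ)) (e' t / (e t + δ)) t :=
    ((hder t (hsub ht)).add_const δ).log (hpos ht).ne'
  have hAB : A ≤ B := hx.1.trans hx.2
  have hmxy : IntervalIntegrable m volume x y :=
    hmint.mono_set (by rw [uIcc_of_le hxy, uIcc_of_le hAB]; exact hsub)
  calc |Real.log (e y + δ) - Real.log (e x + δ)|
      ≤ ∫ t in x..y, m t := by
        refine norm_sub_le_integral_of_norm_deriv_le_of_le hxy
          (fun t ht => (hlog ht).continuousAt.continuousWithinAt)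
          (fun t ht => (hlog (Ioo_subset_Icc_self ht)).differentiableAt.differentiableWithinAt)
          ?_ hmxy
        filter_upwards [hbound] with t hbt ht
        have ht := Ioo_subset_Icc_self ht
        rw [(hlog ht).deriv, Real.norm_eq_abs, abs_div, abs_of_pos (hpos ht),
          div_le_iff₀ (hpos ht)]
        exact (hbt (hsub ht)).trans
          (mul_le_mul_of_nonneg_left (le_add_of_nonneg_right hδ.le) (hm t (hsub ht)))
    _ ≤ ∫ t in A..B, m t := by
        refine intervalIntegral.integral_mono_interval hx.1 hxy hy.2 ?_ hmint
        filter_upwards [ae_restrict_mem measurableSet_Ioc] with t ht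
        exact hm t (Ioc_subset_Icc_self ht)

lemma le_mul_exp_integral_of_abs_deriv_le
    (hder : ∀ t ∈ Icc A B, HasDerivAt e (e' t) t) (he : ∀ t ∈ Icc A B, 0 ≤ e t)
    (hm : ∀ t ∈ Icc A B, 0 ≤ m t) (hmint : IntervalIntegrable m volume A B)
    (hbound : ∀ᵐ t, t ∈ Icc A B → |e' t| ≤ m t * e t) (hx : x ∈ Icc A B) (hy : y ∈ Icc A B) :
    e y ≤ e x * Real.exp (∫ t in A..B, m t) := by
  have happrox : ∀ δ > 0, e y + δ ≤ (e x + δ) * Real.exp (∫ t in A..B, m t) := fun δ hδ => by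
    have hxpos : 0 < e x + δ := add_pos_of_nonneg_of_pos (he x hx) hδ
    have hypos : 0 < e y + δ := add_pos_of_nonneg_of_pos (he y hy) hδ
    have hlog := (le_abs_self _).trans
      (log_add_sub_log_add_le_integral hδ hder he hm hmint hbound hx hy)
    rw [← Real.log_div hypos.ne' hxpos.ne', Real.log_le_iff_le_exp (div_pos hypos hxpos),
      div_le_iff₀ hxpos] at hlog
    rwa [mul_comm]
  have hleft : ContinuousWithinAt (fun δ => e y + δ) (Ioi 0) 0 := by fun_prop
  have hright :
      ContinuousWithinAt (fun δ => (e x + δ) * Real.exp (∫ t in A..B, m t)) (Ioi 0) 0 := by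
    fun_prop
  simpa using hleft.closure_le (by simp) hright happrox

end Gronwall

section PlanarEnergy

/-- The energy of the state `(x, y)` of the planar system, which bounds its solutions a priori. The
terms are multiples of the potentials of `sgnPow s` and `sgnPow s⁻¹`, with the coefficients of the
quantity conserved at `κ = 0` dropped to keep the energy positive whatever the sign of `λ`. -/
noncomputable def planarEnergy (s x y : ℝ) : ℝ := |x| ^ (s + 1) + |y| ^ (s⁻¹ + 1)

variable {s q x : ℝ}

lemma planarEnergy_nonneg (s x y : ℝ) : 0 ≤ planarEnergy s x y := by
  unfold planarEnergy
  positivity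

lemma planarEnergy_pos_iff (hs : 0 < s) (x y : ℝ) : 0 < planarEnergy s x y ↔ x ≠ 0 ∨ y ≠ 0 := by
  have hs₁ : s + 1 ≠ 0 := by positivity
  have hs₂ : s⁻¹ + 1 ≠ 0 := by positivity
  rw [(planarEnergy_nonneg s x y).lt_iff_ne', ← not_and_or, not_iff_not, planarEnergy,
    add_eq_zero_iff_of_nonneg (by positivity) (by positivity),
    Real.rpow_eq_zero (abs_nonneg x) hs₁, Real.rpow_eq_zero (abs_nonneg y) hs₂, abs_eq_zero,
    abs_eq_zero]

lemma le_one_add_rpow (hx : 0 ≤ x) (hq : 1 ≤ q) : x ≤ 1 + x ^ q := by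
  rcases le_total x 1 with hx₁ | hx₁
  · exact le_add_of_le_of_nonneg hx₁ (Real.rpow_nonneg hx q)
  · exact le_add_of_nonneg_of_le zero_le_one (Real.self_le_rpow_of_one_le hx₁ hq)

lemma abs_fst_le_one_add_planarEnergy (hs : 0 < s) (x y : ℝ) : |x| ≤ 1 + planarEnergy s x y := by
  have hpow := le_one_add_rpow (abs_nonneg x) (le_add_of_nonneg_left hs.le : 1 ≤ s + 1)
  have hy : 0 ≤ |y| ^ (s⁻¹ + 1) := by positivity
  rw [planarEnergy]
  linarith

lemma abs_snd_le_one_add_planarEnergy (hs : 0 < s) (x y : ℝ) : |y| ≤ 1 + planarEnergy s x y := by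
  have hpow := le_one_add_rpow (abs_nonneg y) (le_add_of_nonneg_left (inv_pos.2 hs).le)
  have hx : 0 ≤ |x| ^ (s + 1) := by positivity
  rw [planarEnergy]
  linarith

lemma continuous_planarEnergy (hs : 0 < s) :
    Continuous fun z : ℝ × ℝ => planarEnergy s z.1 z.2 := by
  have hs₁ : 0 ≤ s + 1 := by positivity
  have hs₂ : 0 ≤ s⁻¹ + 1 := by positivity
  exact (continuous_fst.abs.rpow_const fun _ => Or.inr hs₁).add
    (continuous_snd.abs.rpow_const fun _ => Or.inr hs₂)

lemma abs_sgnPow_mul_sgnPow_inv_le (hs : 0 < s) (x y : ℝ) :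
    |sgnPow s x * sgnPow s⁻¹ y| ≤ planarEnergy s x y := by
  rw [abs_mul, abs_sgnPow hs.ne', abs_sgnPow (inv_ne_zero hs.ne'), planarEnergy,
    Real.rpow_add_one' (abs_nonneg x) (by positivity),
    Real.rpow_add_one' (abs_nonneg y) (by positivity)]
  rcases le_total |y| (|x| ^ s) with hyx | hxy
  · have hy : |y| ^ s⁻¹ ≤ |x| :=
      (Real.rpow_inv_le_iff_of_pos (by positivity) (by positivity) hs).2 hyx
    exact le_add_of_le_of_nonneg (by gcongr) (by positivity)
  · rw [mul_comm (|y| ^ s⁻¹)]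
    exact le_add_of_nonneg_of_le (by positivity) (by gcongr)

lemma abs_planarEnergy_deriv_le (hs : 0 < s) (k lam x y : ℝ) :
    |(s + 1) * (sgnPow s x * sgnPow s⁻¹ y) +
        (s⁻¹ + 1) * (sgnPow s⁻¹ y * (k * y - lam * sgnPow s x))| ≤
      ((s + 1) + (s⁻¹ + 1) * (|k| + |lam|)) * planarEnergy s x y := by
  have hcross := abs_sgnPow_mul_sgnPow_inv_le hs x y
  have hsquare : |sgnPow s⁻¹ y * y| ≤ planarEnergy s x y := by
    rw [abs_mul, abs_sgnPow (inv_ne_zero hs.ne'),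
      ← Real.rpow_add_one' (abs_nonneg y) (by positivity)]
    exact le_add_of_nonneg_left (by positivity)
  calc _ = |(s + 1) * (sgnPow s x * sgnPow s⁻¹ y) + (s⁻¹ + 1) *
          (k * (sgnPow s⁻¹ y * y) - lam * (sgnPow s x * sgnPow s⁻¹ y))| := by ring_nf
    _ ≤ (s + 1) * |sgnPow s x * sgnPow s⁻¹ y| + (s⁻¹ + 1) *
          (|k| * |sgnPow s⁻¹ y * y| + |lam| * |sgnPow s x * sgnPow s⁻¹ y|) := by
        refine (abs_add_le _ _).trans (add_le_add ?_ ?_)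
        · rw [abs_mul, abs_of_pos (by positivity : 0 < s + 1)]
        · rw [abs_mul, abs_of_pos (by positivity : 0 < s⁻¹ + 1), ← abs_mul k, ← abs_mul lam]
          gcongr
          exact abs_sub _ _
    _ ≤ (s + 1) * planarEnergy s x y + (s⁻¹ + 1) *
          (|k| * planarEnergy s x y + |lam| * planarEnergy s x y) := by gcongr
    _ = _ := by ring

end PlanarEnergy

/-- The planar first-order system satisfied by `w` and `u = |w'|^{s-1} w'`, where `s = p - 1`. -/
structure IsPlanarSolution (s lam κ : ℝ) (w u : ℝ → ℝ) : Prop where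
  hasDerivAt_fst : ∀ t, HasDerivAt w (sgnPow s⁻¹ (u t)) t
  hasDerivAt_snd : ∀ t, HasDerivAt u (κ * t * u t - lam * sgnPow s (w t)) t

lemma IsModelSolution.isPlanarSolution {p lam κ a : ℝ} {w : ℝ → ℝ} (hp : 1 < p)
    (h : IsModelSolution p lam κ a w) :
    IsPlanarSolution (p - 1) lam κ w (fun t => sgnPow (p - 1) (deriv w t)) := by
  obtain ⟨hw, -, hflux, -, -⟩ := h
  refine ⟨fun t => ?_, fun t => ?_⟩
  · rw [sgnPow_inv_sgnPow (sub_pos.2 hp).ne']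
    exact (hw.differentiable one_ne_zero t).hasDerivAt
  · have hquad : HasDerivAt (fun r : ℝ => κ * r ^ 2 / 2) (κ * t) t := by
      refine (((hasDerivAt_pow 2 t).const_mul κ).div_const 2).congr_deriv ?_
      simp only [Nat.cast_ofNat, Nat.add_one_sub_one, pow_one]
      ring
    have hexp (r : ℝ) : Real.exp (κ * r ^ 2 / 2) * Real.exp (-κ * r ^ 2 / 2) = 1 := by
      rw [← Real.exp_add, neg_mul, neg_div, add_neg_cancel, Real.exp_zero]
    refine ((hquad.exp.mul (hflux t)).congr_of_eventuallyEq (.of_forall fun r => ?_)).congr_deriv ?_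
    · rw [Pi.mul_apply, ← mul_assoc, hexp, one_mul]
    · linear_combination
        (κ * t * sgnPow (p - 1) (deriv w t) - lam * sgnPow (p - 1) (w t)) * hexp t

namespace IsPlanarSolution

variable {s lam κ : ℝ} {w u : ℝ → ℝ}

protected lemma continuous_fst (h : IsPlanarSolution s lam κ w u) : Continuous w :=
  continuous_iff_continuousAt.2 fun t => (h.hasDerivAt_fst t).continuousAt

protected lemma continuous_snd (h : IsPlanarSolution s lam κ w u) : Continuous u :=
  continuous_iff_continuousAt.2 fun t => (h.hasDerivAt_snd t).continuousAt

lemma hasDerivAt_planarEnergy (h : IsPlanarSolution s lam κ w u) (hs : 0 < s) (t : ℝ) :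
    HasDerivAt (fun t => planarEnergy s (w t) (u t))
      ((s + 1) * (sgnPow s (w t) * sgnPow s⁻¹ (u t)) +
        (s⁻¹ + 1) * (sgnPow s⁻¹ (u t) * (κ * t * u t - lam * sgnPow s (w t)))) t := by
  refine (((hasDerivAt_abs_rpow_add_one hs (w t)).comp t (h.hasDerivAt_fst t)).add
    ((hasDerivAt_abs_rpow_add_one (inv_pos.2 hs) (u t)).comp t (h.hasDerivAt_snd t))).congr_deriv ?_
  ring

lemma exists_planarEnergy_le_mul (hs : 0 < s) (lam κ A B : ℝ) :
    ∃ C > 0, ∀ w u, IsPlanarSolution s lam κ w u → ∀ x ∈ Icc A B, ∀ y ∈ Icc A B,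
      planarEnergy s (w y) (u y) ≤ planarEnergy s (w x) (u x) * C := by
  refine ⟨Real.exp (∫ t in A..B, ((s + 1) + (s⁻¹ + 1) * (|κ * t| + |lam|))), Real.exp_pos _,
    fun w u h x hx y hy => ?_⟩
  exact le_mul_exp_integral_of_abs_deriv_le (fun t _ => h.hasDerivAt_planarEnergy hs t)
    (fun t _ => planarEnergy_nonneg s (w t) (u t)) (fun t _ => by positivity)
    (Continuous.intervalIntegrable (by fun_prop) A B)
    (ae_of_all _ fun t _ => abs_planarEnergy_deriv_le hs (κ * t) lam (w t) (u t)) hx hy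

lemma ne_zero_or_ne_zero (h : IsPlanarSolution s lam κ w u) (hs : 0 < s) {a : ℝ}
    (ha : w a ≠ 0 ∨ u a ≠ 0) (t : ℝ) : w t ≠ 0 ∨ u t ≠ 0 := by
  obtain ⟨C, hC, hle⟩ := exists_planarEnergy_le_mul hs lam κ (min a t) (max a t)
  rw [← planarEnergy_pos_iff hs] at ha ⊢
  exact pos_of_mul_pos_left (ha.trans_le (hle w u h t (by simp) a (by simp))) hC.le

end IsPlanarSolution

section PlanarWeight

/-- A local Lipschitz modulus, up to a constant, of the field of the planar system at time `t` and
state `(x, y)`, used as the Grönwall weight. On the axes the junk value of `0 ^ r` for `r < 0` makes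
it too small. -/
noncomputable def planarWeight (s t x y : ℝ) : ℝ := 1 + |t| + |x| ^ (s - 1) + |y| ^ (s⁻¹ - 1)

variable {s α β γ a b P Q : ℝ}

lemma planarWeight_nonneg (s t x y : ℝ) : 0 ≤ planarWeight s t x y := by
  unfold planarWeight
  positivity

lemma abs_two_mul_add_two_mul_le (hα : 0 ≤ α) (hβ : 0 ≤ β) (hγ : 0 ≤ γ) (hP : |P| ≤ α * |b|)
    (hQ : |Q| ≤ β * |b| + γ * |a|) :
    |2 * (a * P) + 2 * (b * Q)| ≤ (α + 2 * β + γ) * (a ^ 2 + b ^ 2) := by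
  have hab : 2 * |a| * |b| ≤ a ^ 2 + b ^ 2 := by
    simpa only [sq_abs] using two_mul_le_add_sq |a| |b|
  have hb : b ^ 2 ≤ a ^ 2 + b ^ 2 := le_add_of_nonneg_left (sq_nonneg a)
  calc |2 * (a * P) + 2 * (b * Q)|
      ≤ 2 * (|a| * |P|) + 2 * (|b| * |Q|) := by
        refine (abs_add_le _ _).trans_eq ?_
        simp only [abs_mul, abs_two]
    _ ≤ 2 * (|a| * (α * |b|)) + 2 * (|b| * (β * |b| + γ * |a|)) := by gcongr
    _ = (α + γ) * (2 * |a| * |b|) + 2 * β * b ^ 2 := by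
        rw [← sq_abs b]
        ring
    _ ≤ (α + γ) * (a ^ 2 + b ^ 2) + 2 * β * (a ^ 2 + b ^ 2) := by gcongr
    _ = (α + 2 * β + γ) * (a ^ 2 + b ^ 2) := by ring

lemma exists_abs_sq_dist_deriv_le (hs : 0 < s) (lam κ M : ℝ) :
    ∃ C : ℝ, 0 ≤ C ∧ ∀ t x y x₂ y₂ : ℝ, x ≠ 0 → y ≠ 0 →
      |x| ≤ M → |y| ≤ M → |x₂| ≤ M → |y₂| ≤ M →
      |2 * ((x - x₂) * (sgnPow s⁻¹ y - sgnPow s⁻¹ y₂)) +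
          2 * ((y - y₂) * (κ * t * y - lam * sgnPow s x - (κ * t * y₂ - lam * sgnPow s x₂)))| ≤
        C * planarWeight s t x y * ((x - x₂) ^ 2 + (y - y₂) ^ 2) := by
  obtain ⟨C₁, hC₁, hinv⟩ := exists_abs_sgnPow_sub_le (inv_pos.2 hs) M
  obtain ⟨C₂, hC₂, hpow⟩ := exists_abs_sgnPow_sub_le hs M
  refine ⟨C₁ + 2 * |κ| + |lam| * C₂, by positivity, fun t x y x₂ y₂ hx hy hxM hyM hx₂ hy₂ => ?_⟩
  have hm := planarWeight_nonneg s t x y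
  obtain ⟨htm, hxm, hym⟩ : |t| ≤ planarWeight s t x y ∧
      1 + |x| ^ (s - 1) ≤ planarWeight s t x y ∧ 1 + |y| ^ (s⁻¹ - 1) ≤ planarWeight s t x y := by
    have hX : 0 ≤ |x| ^ (s - 1) := by positivity
    have hY : 0 ≤ |y| ^ (s⁻¹ - 1) := by positivity
    have ht := abs_nonneg t
    rw [planarWeight]
    refine ⟨?_, ?_, ?_⟩ <;> linarith
  set m := planarWeight s t x y
  have hfst : |sgnPow s⁻¹ y - sgnPow s⁻¹ y₂| ≤ C₁ * m * |y - y₂| :=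
    (hinv y y₂ hy hyM hy₂).trans (by gcongr)
  have hsnd : |κ * t * y - lam * sgnPow s x - (κ * t * y₂ - lam * sgnPow s x₂)| ≤
      |κ| * m * |y - y₂| + |lam| * C₂ * m * |x - x₂| :=
    calc _ = |κ * t * (y - y₂) - lam * (sgnPow s x - sgnPow s x₂)| := by ring_nf
      _ ≤ |κ| * |t| * |y - y₂| + |lam| * |sgnPow s x - sgnPow s x₂| := by
        simpa only [abs_mul] using abs_sub (κ * t * (y - y₂)) (lam * (sgnPow s x - sgnPow s x₂))
      _ ≤ |κ| * m * |y - y₂| + |lam| * (C₂ * (1 + |x| ^ (s - 1)) * |x - x₂|) := by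
        gcongr
        exact hpow x x₂ hx hxM hx₂
      _ ≤ |κ| * m * |y - y₂| + |lam| * (C₂ * m * |x - x₂|) := by gcongr
      _ = |κ| * m * |y - y₂| + |lam| * C₂ * m * |x - x₂| := by ring
  refine (abs_two_mul_add_two_mul_le (by positivity) (by positivity) (by positivity)
    hfst hsnd).trans_eq ?_
  ring

end PlanarWeight

namespace IsPlanarSolution

variable {s lam κ a : ℝ} {w u w₂ u₂ : ℝ → ℝ}

lemma hasDerivAt_sq_dist (h : IsPlanarSolution s lam κ w u) (h₂ : IsPlanarSolution s lam κ w₂ u₂)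
    (t : ℝ) :
    HasDerivAt (fun t => (w t - w₂ t) ^ 2 + (u t - u₂ t) ^ 2)
      (2 * ((w t - w₂ t) * (sgnPow s⁻¹ (u t) - sgnPow s⁻¹ (u₂ t))) +
        2 * ((u t - u₂ t) * (κ * t * u t - lam * sgnPow s (w t) -
          (κ * t * u₂ t - lam * sgnPow s (w₂ t))))) t := by
  refine ((((h.hasDerivAt_fst t).sub (h₂.hasDerivAt_fst t)).pow 2).add
    (((h.hasDerivAt_snd t).sub (h₂.hasDerivAt_snd t)).pow 2)).congr_deriv ?_
  simp only [Pi.sub_apply, Nat.cast_ofNat, Nat.add_one_sub_one, pow_one]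
  ring

lemma deriv_fst_ne_zero (h : IsPlanarSolution s lam κ w u) (hs : 0 < s)
    (ha : w a ≠ 0 ∨ u a ≠ 0) (t : ℝ) (ht : w t = 0) : sgnPow s⁻¹ (u t) ≠ 0 :=
  sgnPow_ne_zero s⁻¹ ((h.ne_zero_or_ne_zero hs ha t).resolve_left (not_not.2 ht))

lemma deriv_snd_ne_zero (h : IsPlanarSolution s lam κ w u) (hs : 0 < s) (hlam : lam ≠ 0)
    (ha : w a ≠ 0 ∨ u a ≠ 0) (t : ℝ) (ht : u t = 0) : κ * t * u t - lam * sgnPow s (w t) ≠ 0 := by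
  have hw : w t ≠ 0 := (h.ne_zero_or_ne_zero hs ha t).resolve_right (not_not.2 ht)
  rw [ht, mul_zero, zero_sub]
  exact neg_ne_zero.2 (mul_ne_zero hlam (sgnPow_ne_zero s hw))

lemma ae_ne_zero_and_ne_zero (h : IsPlanarSolution s lam κ w u) (hs : 0 < s) (hlam : lam ≠ 0)
    (ha : w a ≠ 0 ∨ u a ≠ 0) : ∀ᵐ t, w t ≠ 0 ∧ u t ≠ 0 := by
  have hw := countable_zeros_of_hasDerivAt_ne_zero h.hasDerivAt_fst (h.deriv_fst_ne_zero hs ha)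
  have hu := countable_zeros_of_hasDerivAt_ne_zero h.hasDerivAt_snd (h.deriv_snd_ne_zero hs hlam ha)
  filter_upwards [hw.ae_notMem volume, hu.ae_notMem volume] with t hwt hut using ⟨hwt, hut⟩

lemma locallyIntegrable_planarWeight (h : IsPlanarSolution s lam κ w u) (hs : 0 < s)
    (hlam : lam ≠ 0) (ha : w a ≠ 0 ∨ u a ≠ 0) :
    LocallyIntegrable (fun t => planarWeight s t (w t) (u t)) := by
  have hw : LocallyIntegrable (fun t => |w t| ^ (s - 1)) :=
    locallyIntegrable_abs_rpow_of_hasDerivAt (by linarith) h.hasDerivAt_fst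
      (h.deriv_fst_ne_zero hs ha)
  have hu : LocallyIntegrable (fun t => |u t| ^ (s⁻¹ - 1)) :=
    locallyIntegrable_abs_rpow_of_hasDerivAt (by linarith [inv_pos.2 hs]) h.hasDerivAt_snd
      (h.deriv_snd_ne_zero hs hlam ha)
  have ht : LocallyIntegrable (fun t : ℝ => 1 + |t|) :=
    (continuous_const.add continuous_abs).locallyIntegrable
  exact (ht.add hw).add hu

lemma exists_abs_le_of_planarEnergy_le (hs : 0 < s) (lam κ A B L : ℝ) :
    ∃ M, ∀ w u, IsPlanarSolution s lam κ w u → ∀ x ∈ Icc A B, planarEnergy s (w x) (u x) ≤ L →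
      ∀ y ∈ Icc A B, |w y| ≤ M ∧ |u y| ≤ M := by
  obtain ⟨C, hC, hle⟩ := exists_planarEnergy_le_mul hs lam κ A B
  refine ⟨1 + L * C, fun w u h x hx hL y hy => ?_⟩
  have henergy : planarEnergy s (w y) (u y) ≤ L * C := (hle w u h x hx y hy).trans (by gcongr)
  exact ⟨(abs_fst_le_one_add_planarEnergy hs (w y) (u y)).trans (by gcongr),
    (abs_snd_le_one_add_planarEnergy hs (w y) (u y)).trans (by gcongr)⟩

lemma exists_sq_dist_le_mul (h : IsPlanarSolution s lam κ w u) (hs : 0 < s) (hlam : lam ≠ 0)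
    (ha : w a ≠ 0 ∨ u a ≠ 0) (A B L : ℝ) :
    ∃ C, ∀ w₂ u₂, IsPlanarSolution s lam κ w₂ u₂ →
      ∀ x ∈ Icc A B, planarEnergy s (w₂ x) (u₂ x) ≤ L → ∀ y ∈ Icc A B,
        (w y - w₂ y) ^ 2 + (u y - u₂ y) ^ 2 ≤ ((w x - w₂ x) ^ 2 + (u x - u₂ x) ^ 2) * C := by
  obtain ⟨M, hM⟩ :=
    exists_abs_le_of_planarEnergy_le hs lam κ A B (max (planarEnergy s (w A) (u A)) L)
  obtain ⟨C, hC, hfield⟩ := exists_abs_sq_dist_deriv_le hs lam κ M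
  have hint : IntervalIntegrable (fun t => C * planarWeight s t (w t) (u t)) volume A B :=
    ((h.locallyIntegrable_planarWeight hs hlam ha).integrableOn_isCompact
      isCompact_uIcc).intervalIntegrable.const_mul C
  refine ⟨Real.exp (∫ t in A..B, C * planarWeight s t (w t) (u t)),
    fun w₂ u₂ h₂ x hx hL y hy => ?_⟩
  have hA : A ∈ Icc A B := left_mem_Icc.2 (hx.1.trans hx.2)
  refine le_mul_exp_integral_of_abs_deriv_le (fun t _ => h.hasDerivAt_sq_dist h₂ t)
    (fun t _ => by positivity) (fun t _ => mul_nonneg hC (planarWeight_nonneg s t _ _)) hint ?_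
    hx hy
  filter_upwards [h.ae_ne_zero_and_ne_zero hs hlam ha] with t hne ht
  obtain ⟨hw, hu⟩ := hM w u h A hA (le_max_left _ _) t ht
  obtain ⟨hw₂, hu₂⟩ := hM w₂ u₂ h₂ x hx (hL.trans (le_max_right _ _)) t ht
  exact hfield t _ _ _ _ hne.1 hne.2 hw hu hw₂ hu₂

end IsPlanarSolution

section Convergence

lemma tendstoUniformlyOn_of_eventually_sq_sub_le {ι X : Type*} {l : Filter ι} {F : ι → X → ℝ}
    {f : X → ℝ} {K : Set X} {δ : ι → ℝ} (hδ : Tendsto δ l (𝓝 0))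
    (h : ∀ᶠ i in l, ∀ x ∈ K, (f x - F i x) ^ 2 ≤ δ i) : TendstoUniformlyOn F f l K := by
  refine Metric.tendstoUniformlyOn_iff.2 fun ε hε => ?_
  filter_upwards [h, hδ.eventually_lt_const (sq_pos_of_pos hε)] with i hi hδi x hx
  exact abs_lt_of_sq_lt_sq ((hi x hx).trans_lt hδi) hε.le

lemma tendstoLocallyUniformly_continuous_comp {ι X Y Z : Type*} [TopologicalSpace X]
    [WeaklyLocallyCompactSpace X] [UniformSpace Y] [UniformSpace Z] {l : Filter ι}
    {F : ι → X → Y} {f : X → Y} {g : Y → Z} (hg : Continuous g) (hF : ∀ i, Continuous (F i))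
    (hf : Continuous f) (h : TendstoLocallyUniformly F f l) :
    TendstoLocallyUniformly (fun i => g ∘ F i) (g ∘ f) l := by
  have hlim : Tendsto (fun i => (⟨F i, hF i⟩ : C(X, Y))) l (𝓝 ⟨f, hf⟩) :=
    ContinuousMap.tendsto_iff_tendstoLocallyUniformly.2 h
  exact ContinuousMap.tendsto_iff_tendstoLocallyUniformly.1
    (((ContinuousMap.continuous_postcomp ⟨g, hg⟩).tendsto _).comp hlim)

end Convergence

lemma IsPlanarSolution.tendstoLocallyUniformly {ι : Type*} {l : Filter ι} {s lam κ a : ℝ}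
    {w u : ℝ → ℝ} {W U : ι → ℝ → ℝ} {τ : ι → ℝ} (h : IsPlanarSolution s lam κ w u)
    (hWU : ∀ i, IsPlanarSolution s lam κ (W i) (U i)) (hs : 0 < s) (hlam : lam ≠ 0)
    (ha : w a ≠ 0 ∨ u a ≠ 0) (hτ : Tendsto τ l (𝓝 a))
    (hW : Tendsto (fun i => W i (τ i)) l (𝓝 (w a)))
    (hU : Tendsto (fun i => U i (τ i)) l (𝓝 (u a))) :
    TendstoLocallyUniformly W w l ∧ TendstoLocallyUniformly U u l := by
  simp only [tendstoLocallyUniformly_iff_forall_isCompact, ← forall_and]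
  intro K hK
  obtain ⟨R, -, hR⟩ := (hK.isBounded.insert a).subset_ball_lt 0 0
  rw [Real.ball_eq_Ioo, zero_sub, zero_add] at hR
  have hE : ∀ᶠ i in l, planarEnergy s (W i (τ i)) (U i (τ i)) ≤ planarEnergy s (w a) (u a) + 1 :=
    (((continuous_planarEnergy hs).tendsto (w a, u a)).comp
      (hW.prodMk_nhds hU)).eventually_le_const (lt_add_one _)
  have hτR : ∀ᶠ i in l, τ i ∈ Ioo (-R) R := hτ.eventually_mem (Ioo_mem_nhds
    (hR (mem_insert a K)).1 (hR (mem_insert a K)).2)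
  obtain ⟨C, hC⟩ := h.exists_sq_dist_le_mul hs hlam ha (-R) R (planarEnergy s (w a) (u a) + 1)
  have hδ : Tendsto
      (fun i => ((w (τ i) - W i (τ i)) ^ 2 + (u (τ i) - U i (τ i)) ^ 2) * C) l (𝓝 0) := by
    have hw := ((h.continuous_fst.tendsto a).comp hτ).sub hW
    have hu := ((h.continuous_snd.tendsto a).comp hτ).sub hU
    simpa using ((hw.pow 2).add (hu.pow 2)).mul_const C
  have hdist : ∀ᶠ i in l, ∀ t ∈ K, (w t - W i t) ^ 2 + (u t - U i t) ^ 2 ≤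
      ((w (τ i) - W i (τ i)) ^ 2 + (u (τ i) - U i (τ i)) ^ 2) * C := by
    filter_upwards [hE, hτR] with i hEi hτi t ht
    exact hC _ _ (hWU i) _ (Ioo_subset_Icc_self hτi) hEi t
      (Ioo_subset_Icc_self (hR (mem_insert_of_mem a ht)))
  exact ⟨tendstoUniformlyOn_of_eventually_sq_sub_le hδ (hdist.mono fun i hi t ht =>
      (le_add_of_nonneg_right (sq_nonneg _)).trans (hi t ht)),
    tendstoUniformlyOn_of_eventually_sq_sub_le hδ (hdist.mono fun i hi t ht =>
      (le_add_of_nonneg_left (sq_nonneg _)).trans (hi t ht))⟩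

theorem modelSolution_continuous_dependence_general (p lam κ : ℝ) (hp : 1 < p) (hlam : lam ≠ 0)
    (W : ℝ → ℝ → ℝ) (hW : ∀ a : ℝ, IsModelSolution p lam κ a (W a)) (a : ℝ) :
    TendstoLocallyUniformly W (W a) (𝓝 a) ∧
      TendstoLocallyUniformly (fun b => deriv (W b)) (deriv (W a)) (𝓝 a) := by
  have hs : 0 < p - 1 := sub_pos.2 hp
  have hplanar (b : ℝ) := (hW b).isPlanarSolution hp
  have hinit (b : ℝ) : W b b = -1 ∧ deriv (W b) b = 0 := (hW b).2.2.2
  obtain ⟨hfst, hsnd⟩ := (hplanar a).tendstoLocallyUniformly (a := a) (τ := id) hplanar hs hlam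
    (Or.inl (by simp [hinit])) tendsto_id (by simp [hinit]) (by simp [hinit])
  have hderiv := tendstoLocallyUniformly_continuous_comp (continuous_sgnPow (inv_pos.2 hs))
    (fun b => (hplanar b).continuous_snd) (hplanar a).continuous_snd hsnd
  refine ⟨hfst, ?_⟩
  simpa only [Function.comp_def, sgnPow_inv_sgnPow hs.ne'] using hderiv

/-- **Continuous dependence of the model solution on the initial point.**
Fix `1 < p < ∞`, `λ > 0`, `κ ≤ 0`, and let `W a` denote the solution of the model IVP
with initial point `a`. If `aₙ → a`, then `W aₙ → W a` and `(W aₙ)' → (W a)'`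
uniformly on every compact subset of `ℝ`. -/
theorem modelSolution_continuous_dependence (p lam κ : ℝ)
    (hp : 1 < p) (hlam : 0 < lam) (hκ : κ ≤ 0)
    (W : ℝ → ℝ → ℝ) (hW : ∀ a : ℝ, IsModelSolution p lam κ a (W a))
    (aseq : ℕ → ℝ) (a : ℝ) (ha : Filter.Tendsto aseq Filter.atTop (nhds a)) :
    ∀ K : Set ℝ, IsCompact K →
      TendstoUniformlyOn (fun n => W (aseq n)) (W a) Filter.atTop K ∧
      TendstoUniformlyOn (fun n => deriv (W (aseq n))) (deriv (W a)) Filter.atTop K := by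
  intro K hK
  obtain ⟨hfst, hsnd⟩ := modelSolution_continuous_dependence_general p lam κ hp hlam.ne' W hW a
  rw [tendstoLocallyUniformly_iff_forall_isCompact] at hfst hsnd
  exact ⟨fun v hv => ha.eventually (hfst K hK v hv), fun v hv => ha.eventually (hsnd K hK v hv)⟩
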